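/- Let L ≥ 2. The Kennedy–Tasaki operator U_KT = ∏_{1≤u<v≤L} exp(iπ Sᶻ_u Sˣ_v) on (ℂ³)^{⊗L} is Hermitian and involutive: U_KT† = U_KT and U_KT² = 1 (hence U_KT is unitary). -/

import Mathlib

noncomputable section
open Complex Matrix

/-- The Hilbert space operators of the `L`-site spin-1 chain: matrices on `(ℂ³)^{⊗L}`,
with the tensor factors indexed by sites and the single-site ordered basis `(|+⟩,|0⟩,|−⟩)`. -/
abbrev Op (L : ℕ) : Type := Matrix (Fin L → Fin 3) (Fin L → Fin 3) ℂ

/-- The spin-1 matrix `Sˣ`. -/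
def Sx : Matrix (Fin 3) (Fin 3) ℂ :=
  ((Real.sqrt 2 : ℝ) : ℂ)⁻¹ • !![0, 1, 0; 1, 0, 1; 0, 1, 0]

/-- The spin-1 matrix `Sʸ`. -/
def Sy : Matrix (Fin 3) (Fin 3) ℂ :=
  ((Real.sqrt 2 : ℝ) : ℂ)⁻¹ • !![0, -I, 0; I, 0, -I; 0, I, 0]

/-- The spin-1 matrix `Sᶻ = diag(1,0,−1)`. -/
def Sz : Matrix (Fin 3) (Fin 3) ℂ := !![1, 0, 0; 0, 0, 0; 0, 0, -1]

/-- `site A j` is the one-site operator `A` acting on site `j` and identity elsewhere. -/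
def site {L : ℕ} (A : Matrix (Fin 3) (Fin 3) ℂ) (j : Fin L) : Op L :=
  Matrix.of fun f g => ∏ k : Fin L, if k = j then A (f k) (g k) else (if f k = g k then 1 else 0)

/-- One factor `exp(iπ Sᶻ_u Sˣ_v)` of the Kennedy–Tasaki transformation. -/
def ktFactor {L : ℕ} (u v : Fin L) : Op L :=
  NormedSpace.exp (((Real.pi : ℂ) * I) • (site Sz u * site Sx v))

/-- The Kennedy–Tasaki transformation `U_KT = ∏_{1 ≤ u < v ≤ L} exp(iπ Sᶻ_u Sˣ_v)`
(the factors pairwise commute, so the ordering is immaterial). -/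
def UKT (L : ℕ) : Op L :=
  ((List.finRange L).map fun u =>
    ((List.finRange L).map fun v => if u < v then ktFactor u v else 1).prod).prod

/-- The p-wave basis vector `|↑⟩ = (|+⟩ − |−⟩)/√2`. -/
def up : Fin 3 → ℂ := ![((Real.sqrt 2 : ℝ) : ℂ)⁻¹, 0, -((Real.sqrt 2 : ℝ) : ℂ)⁻¹]

/-- The p-wave basis vector `|↓⟩ = |0⟩`. -/
def down : Fin 3 → ℂ := ![0, 1, 0]

/-- The p-wave basis vector `|h⟩ = (|+⟩ + |−⟩)/√2`. -/
def hole : Fin 3 → ℂ := ![((Real.sqrt 2 : ℝ) : ℂ)⁻¹, 0, ((Real.sqrt 2 : ℝ) : ℂ)⁻¹]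

/-- The rank-one operator `|a⟩⟨b|`. -/
def ketbra (a b : Fin 3 → ℂ) : Matrix (Fin 3) (Fin 3) ℂ := Matrix.vecMulVec a (star b)

/-- `σˣ = |↑⟩⟨↓| + |↓⟩⟨↑|` (annihilating `|h⟩`). -/
def sigx : Matrix (Fin 3) (Fin 3) ℂ := ketbra up down + ketbra down up

/-- `σʸ = −i|↑⟩⟨↓| + i|↓⟩⟨↑|` (annihilating `|h⟩`). -/
def sigy : Matrix (Fin 3) (Fin 3) ℂ := (-I) • ketbra up down + I • ketbra down up

/-- `σᶻ = |↑⟩⟨↑| − |↓⟩⟨↓|` (annihilating `|h⟩`). -/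
def sigz : Matrix (Fin 3) (Fin 3) ℂ := ketbra up up - ketbra down down

/-- `n = |↑⟩⟨↑| + |↓⟩⟨↓|` (annihilating `|h⟩`). -/
def nMat : Matrix (Fin 3) (Fin 3) ℂ := ketbra up up + ketbra down down

/-- `h = |h⟩⟨h|`. -/
def hMat : Matrix (Fin 3) (Fin 3) ℂ := ketbra hole hole

/-- `P = ⊗_{j=1}^L n_j`, the orthogonal projection onto the hole-free subspace. -/
def Pproj (L : ℕ) : Op L := Matrix.of fun f g => ∏ k : Fin L, nMat (f k) (g k)

/-- The Heisenberg coupling `S_j · S_k`. -/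
def heis {L : ℕ} (j k : Fin L) : Op L :=
  site Sx j * site Sx k + site Sy j * site Sy k + site Sz j * site Sz k

/-- The bilinear-biquadratic Hamiltonian
`H_BLBQ(θ) = Σ_{j=1}^{L−1} [cosθ (S_j·S_{j+1}) + sinθ (S_j·S_{j+1})²]`. -/
def HBLBQ (L : ℕ) (θ : ℝ) : Op L :=
  ∑ j : Fin L, if h : (j : ℕ) + 1 < L then
    ((Real.cos θ : ℝ) : ℂ) • heis j ⟨(j : ℕ) + 1, h⟩
      + ((Real.sin θ : ℝ) : ℂ) • (heis j ⟨(j : ℕ) + 1, h⟩) ^ 2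
  else 0

/-- The self-dual Hamiltonian `H_SD(θ) = H_BLBQ(θ) + U_KT H_BLBQ(θ) U_KT`. -/
def HSD (L : ℕ) (θ : ℝ) : Op L := HBLBQ L θ + UKT L * HBLBQ L θ * UKT L

/-- The spin-1/2 XXZ Hamiltonian written in the p-wave basis:
`H_XXZ(θ) = (cosθ−sinθ) Σ_j (−σˣ_jσˣ_{j+1} + σʸ_jσʸ_{j+1}) + sinθ Σ_j σᶻ_jσᶻ_{j+1}`. -/
def HXXZ (L : ℕ) (θ : ℝ) : Op L :=
  ((Real.cos θ - Real.sin θ : ℝ) : ℂ) •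
    (∑ j : Fin L, if h : (j : ℕ) + 1 < L then
      -(site sigx j * site sigx ⟨(j : ℕ) + 1, h⟩) + site sigy j * site sigy ⟨(j : ℕ) + 1, h⟩
    else 0)
  + ((Real.sin θ : ℝ) : ℂ) •
    (∑ j : Fin L, if h : (j : ℕ) + 1 < L then
      site sigz j * site sigz ⟨(j : ℕ) + 1, h⟩
    else 0)

/-- The global product `∏_{j=1}^L exp(c • A_j)` of commuting single-site exponentials. -/
def globalProd (L : ℕ) (A : Matrix (Fin 3) (Fin 3) ℂ) (c : ℂ) : Op L :=
  ((List.finRange L).map fun j => NormedSpace.exp (c • site A j)).prod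

/-- The symmetry flux `F^y_j = exp(−iπ Σ_{k<j} Sʸ_k) · Sʸ_j`. -/
def fluxY (L : ℕ) (j : Fin L) : Op L :=
  NormedSpace.exp ((-((Real.pi : ℂ) * I)) •
    ∑ k : Fin L, if (k : ℕ) < (j : ℕ) then site Sy k else 0) * site Sy j


def tens {L : ℕ} (M : Fin L → Matrix (Fin 3) (Fin 3) ℂ) : Op L :=
  Matrix.of fun f g => ∏ k : Fin L, M k (f k) (g k)

theorem tens_mul {L : ℕ} (M N : Fin L → Matrix (Fin 3) (Fin 3) ℂ) :
    tens M * tens N = tens (M * N) := by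
  ext f g
  simp only [tens, Matrix.mul_apply, Matrix.of_apply, Pi.mul_apply, ← Finset.prod_mul_distrib]
  rw [Finset.prod_univ_sum, Fintype.piFinset_univ]

theorem tens_conj {L : ℕ} (M : Fin L → Matrix (Fin 3) (Fin 3) ℂ) :
    (tens M)ᴴ = tens (fun k => (M k)ᴴ) := by
  ext f g
  simp [tens, Matrix.conjTranspose_apply]

theorem site_eq {L : ℕ} (A : Matrix (Fin 3) (Fin 3) ℂ) (j : Fin L) :
    site A j = tens (fun k => if k = j then A else 1) := by
  ext f g
  simp only [tens, site, Matrix.of_apply]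
  refine Finset.prod_congr rfl fun k _ => ?_
  split_ifs <;> simp_all [Matrix.one_apply]

theorem site_commute {L : ℕ} {A B : Matrix (Fin 3) (Fin 3) ℂ} (h : Commute A B) (i j : Fin L) :
    Commute (site A i) (site B j) := by
  rw [Commute, SemiconjBy, site_eq, site_eq, tens_mul, tens_mul]
  congr 1
  funext k
  simp only [Pi.mul_apply]
  split_ifs <;> simp [h.eq]

theorem site_commute_ne {L : ℕ} (A B : Matrix (Fin 3) (Fin 3) ℂ) {i j : Fin L} (h : i ≠ j) :
    Commute (site A i) (site B j) := by
  rw [Commute, SemiconjBy, site_eq, site_eq, tens_mul, tens_mul]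
  congr 1
  funext k
  simp only [Pi.mul_apply]
  split_ifs <;> simp_all

theorem site_mul {L : ℕ} (A B : Matrix (Fin 3) (Fin 3) ℂ) (j : Fin L) :
    site A j * site B j = site (A * B) j := by
  rw [site_eq, site_eq, site_eq, tens_mul]
  congr 1
  funext k
  simp only [Pi.mul_apply]
  split_ifs <;> simp

theorem site_conj {L : ℕ} (A : Matrix (Fin 3) (Fin 3) ℂ) (j : Fin L) :
    (site A j)ᴴ = site Aᴴ j := by
  rw [site_eq, site_eq, tens_conj]
  congr 1
  funext k
  split_ifs <;> simp

theorem sq2 : ((Real.sqrt 2 : ℝ) : ℂ)⁻¹ * ((Real.sqrt 2 : ℝ) : ℂ)⁻¹ = 1 / 2 := by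
  rw [← mul_inv, ← Complex.ofReal_mul, Real.mul_self_sqrt (by norm_num)]
  norm_num

theorem Sx_sq : Sx * Sx = !![1/2, 0, 1/2; 0, 1, 0; 1/2, 0, 1/2] := by
  rw [Sx, smul_mul_smul_comm, sq2]
  ext i j
  fin_cases i <;> fin_cases j <;> simp [Matrix.mul_apply, Fin.sum_univ_three] <;> norm_num

theorem Sx_cube : Sx * Sx * Sx = Sx := by
  rw [Sx_sq, Sx]
  ext i j
  fin_cases i <;> fin_cases j <;> simp [Matrix.mul_apply, Fin.sum_univ_three] <;> ring

theorem Sz_sq : Sz * Sz = !![1, 0, 0; 0, 0, 0; 0, 0, 1] := by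
  rw [Sz]
  ext i j
  fin_cases i <;> fin_cases j <;> simp [Matrix.mul_apply, Fin.sum_univ_three]

theorem Sz_cube : Sz * Sz * Sz = Sz := by
  rw [Sz_sq, Sz]
  ext i j
  fin_cases i <;> fin_cases j <;> simp [Matrix.mul_apply, Fin.sum_univ_three]

theorem Sx_herm : Sxᴴ = Sx := by
  rw [Sx]
  ext i j
  fin_cases i <;> fin_cases j <;> simp [Matrix.conjTranspose_apply]

theorem Sz_herm : Szᴴ = Sz := by
  rw [Sz]
  ext i j
  fin_cases i <;> fin_cases j <;> simp [Matrix.conjTranspose_apply]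

theorem SzSx_comm : Commute (Sz * Sz) (Sx * Sx) := by
  rw [Sz_sq, Sx_sq, Commute, SemiconjBy]
  ext i j
  fin_cases i <;> fin_cases j <;> simp [Matrix.mul_apply, Fin.sum_univ_three]

theorem exp_idem {n : Type*} [Fintype n] [DecidableEq n] (E : Matrix n n ℂ) (hE : E * E = E)
    (c : ℂ) : NormedSpace.exp (c • E) = 1 + (Complex.exp c - 1) • E := by
  rw [NormedSpace.exp_eq_tsum ℂ]
  have h1 : HasSum (fun k : ℕ => ((k.factorial : ℂ)⁻¹ * c ^ k) • E) (Complex.exp c • E) := by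
    apply HasSum.smul_const
    have := NormedSpace.exp_series_hasSum_exp' (𝕂 := ℂ) c
    rw [← Complex.exp_eq_exp_ℂ] at this
    simpa using this
  have h2 : HasSum (fun k : ℕ => if k = 0 then (1 - E) else 0) (1 - E) := hasSum_ite_eq 0 (1 - E)
  have h3 := h1.add h2
  have h4 : (fun k : ℕ => ((k.factorial : ℂ)⁻¹ • (c • E) ^ k)) =
      fun k : ℕ => ((k.factorial : ℂ)⁻¹ * c ^ k) • E + if k = 0 then (1 - E) else 0 := by
    funext k
    rcases k with _ | k
    · simp
    · have : E ^ (k + 1) = E := IsIdempotentElem.pow_succ_eq k hE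
      simp [smul_pow, this, smul_smul]
  have h5 : Complex.exp c • E + (1 - E) = 1 + (Complex.exp c - 1) • E := by
    rw [sub_smul, one_smul]; abel
  rw [← h5, ← h3.tsum_eq, ← h4]

theorem exp_cube {n : Type*} [Fintype n] [DecidableEq n] (P : Matrix n n ℂ) (hP : P * P * P = P) :
    NormedSpace.exp (((Real.pi : ℂ) * I) • P) = 1 - (2 : ℂ) • (P * P) := by
  have hP' : P * (P * P) = P := by rw [← mul_assoc, hP]
  have hQ : (P * P) * (P * P) = P * P := by rw [← mul_assoc, hP]
  have hE : ((1 / 2 : ℂ) • (P + P * P)) * ((1 / 2 : ℂ) • (P + P * P)) =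
      (1 / 2 : ℂ) • (P + P * P) := by
    rw [smul_mul_smul_comm]
    simp only [mul_add, add_mul, hP, hP', hQ]
    module
  have hs : ((Real.pi : ℂ) * I) • P = (2 * (Real.pi : ℂ) * I) • ((1 / 2 : ℂ) • (P + P * P)) +
      (-((Real.pi : ℂ) * I)) • (P * P) := by module
  have hc : Commute ((2 * (Real.pi : ℂ) * I) • ((1 / 2 : ℂ) • (P + P * P)))
      ((-((Real.pi : ℂ) * I)) • (P * P)) := by
    refine Commute.smul_left (Commute.smul_left (Commute.smul_right ?_ _) _) _
    rw [Commute, SemiconjBy, mul_add, add_mul, hP, hP']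
  rw [hs, Matrix.exp_add_of_commute _ _ hc, exp_idem _ hE, exp_idem _ hQ, Complex.exp_two_pi_mul_I,
    Complex.exp_neg, Complex.exp_pi_mul_I]
  simp only [sub_self, zero_smul, add_zero, one_mul]
  norm_num
  module

theorem kt_eq {L : ℕ} {u v : Fin L} (h : u ≠ v) :
    ktFactor u v = 1 - (2 : ℂ) • (site (Sz * Sz) u * site (Sx * Sx) v) ∧
    (site (Sz * Sz) u * site (Sx * Sx) v) * (site (Sz * Sz) u * site (Sx * Sx) v) =
      site (Sz * Sz) u * site (Sx * Sx) v := by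
  have hsq : ∀ A B : Matrix (Fin 3) (Fin 3) ℂ, ∀ C D : Matrix (Fin 3) (Fin 3) ℂ,
      (site A u * site B v) * (site C u * site D v) = site (A * C) u * site (B * D) v := by
    intro A B C D
    rw [(site_commute_ne C B h).symm.mul_mul_mul_comm, site_mul, site_mul]
  constructor
  · rw [ktFactor, exp_cube _ (by rw [hsq, hsq, Sz_cube, Sx_cube]), hsq]
  · rw [hsq, ← mul_assoc, ← mul_assoc, Sz_cube, Sx_cube]

theorem kt_good {L : ℕ} {u v : Fin L} (h : u ≠ v) :
    (ktFactor u v)ᴴ = ktFactor u v ∧ ktFactor u v * ktFactor u v = 1 := by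
  obtain ⟨h1, h2⟩ := kt_eq h
  rw [h1]
  constructor
  · rw [Matrix.conjTranspose_sub, Matrix.conjTranspose_smul, Matrix.conjTranspose_mul, site_conj,
      site_conj, Matrix.conjTranspose_mul, Matrix.conjTranspose_mul, Sx_herm, Sz_herm,
      (site_commute_ne (Sz * Sz) (Sx * Sx) h).eq]
    simp
  · simp only [mul_sub, sub_mul, mul_one, one_mul, smul_mul_smul_comm, h2]
    module

theorem kt_comm {L : ℕ} {u v u' v' : Fin L} (h : u ≠ v) (h' : u' ≠ v') :
    Commute (ktFactor u v) (ktFactor u' v') := by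
  rw [(kt_eq h).1, (kt_eq h').1]
  refine Commute.sub_left (Commute.one_left _) (Commute.sub_right (Commute.one_right _) ?_)
  refine Commute.smul_left (Commute.smul_right ?_ _) _
  refine Commute.mul_left (Commute.mul_right ?_ ?_) (Commute.mul_right ?_ ?_)
  · exact site_commute (Commute.refl _) _ _
  · exact site_commute SzSx_comm _ _
  · exact site_commute SzSx_comm.symm _ _
  · exact site_commute (Commute.refl _) _ _

theorem list_good {n : Type*} [Fintype n] [DecidableEq n] (l : List (Matrix n n ℂ))
    (h : ∀ a ∈ l, aᴴ = a ∧ a * a = 1) (hc : ∀ a ∈ l, ∀ b ∈ l, Commute a b) :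
    (l.prod)ᴴ = l.prod ∧ l.prod * l.prod = 1 := by
  induction l with
  | nil => simp
  | cons a l ih =>
    obtain ⟨i1, i2⟩ := ih (fun b hb => h b (List.mem_cons_of_mem _ hb))
      (fun b hb c hc' => hc b (List.mem_cons_of_mem _ hb) c (List.mem_cons_of_mem _ hc'))
    obtain ⟨a1, a2⟩ := h a List.mem_cons_self
    have hac : Commute a l.prod := Commute.list_prod_right _ _
      (fun b hb => hc a List.mem_cons_self b (List.mem_cons_of_mem _ hb))
    rw [List.prod_cons]
    constructor
    · rw [Matrix.conjTranspose_mul, i1, a1, hac.eq]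
    · rw [hac.symm.mul_mul_mul_comm, a2, i2, one_mul]

theorem ite_comm {L : ℕ} (u v u' v' : Fin L) :
    Commute (if u < v then ktFactor u v else 1) (if u' < v' then ktFactor u' v' else 1) := by
  split_ifs with h h'
  · exact kt_comm h.ne h'.ne
  all_goals simp

/-- The Kennedy–Tasaki operator `U_KT = ∏_{1≤u<v≤L} exp(iπ Sᶻ_u Sˣ_v)` on
`(ℂ³)^{⊗L}` is Hermitian and involutive (hence unitary). -/
theorem UKT_hermitian_involutive (L : ℕ) (hL : 2 ≤ L) :
    (UKT L)ᴴ = UKT L ∧ UKT L * UKT L = 1 := by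
  unfold UKT
  apply list_good
  · intro a ha
    obtain ⟨u, -, rfl⟩ := List.mem_map.1 ha
    apply list_good
    · intro b hb
      obtain ⟨v, -, rfl⟩ := List.mem_map.1 hb
      split_ifs with h
      · exact kt_good h.ne
      · simp
    · intro b hb c hc
      obtain ⟨v, -, rfl⟩ := List.mem_map.1 hb
      obtain ⟨w, -, rfl⟩ := List.mem_map.1 hc
      exact ite_comm _ _ _ _
  · intro a ha b hb
    obtain ⟨u, -, rfl⟩ := List.mem_map.1 ha
    obtain ⟨u', -, rfl⟩ := List.mem_map.1 hb
    refine Commute.list_prod_left _ _ fun x hx => Commute.list_prod_right _ _ fun y hy => ?_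
    obtain ⟨v, -, rfl⟩ := List.mem_map.1 hx
    obtain ⟨w, -, rfl⟩ := List.mem_map.1 hy
    exact ite_comm _ _ _ _

end
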